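/- Let n ≥ 2, m ≥ 1, and let H be a Hankel tensor of order m and dimension n with parameter vector h ∈ ℂ^{d+1}, d = (n−1)m. Let s = ⌊d/2⌋ and r = rank C_{d−s,s}(h). Suppose r < d/2 + 1 and there exists a nonzero f = (f_0,…,f_r) ∈ ker C_{d−r,r}(h) whose binary form f(x,y) = f_0 x^r + f_1 x^{r−1}y + ⋯ + f_r y^r is squarefree as a homogeneous polynomial in ℂ[x,y]. Then the Vandermonde rank decomposition of H of length r is unique up to permutation and scaling: if H(i) = Σ_{k=1}^r ∏_{j=1}^m v(a_k,b_k)(i_j) = Σ_{k=1}^r ∏_{j=1}^m v(c_k,e_k)(i_j), then there exist a permutation σ of {1,…,r} and nonzero scalars t_1,…,t_r ∈ ℂ with (c_k, e_k) = (t_k a_{σ(k)}, t_k b_{σ(k)}) for all k. -/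

import Mathlib

open scoped BigOperators
open MvPolynomial

noncomputable section

/-- An order-`m`, dimension-`n` complex tensor. -/
abbrev Tensor (m n : ℕ) := (Fin m → Fin n) → ℂ

/-- Tensors expressible as a sum of `r` rank-one tensors. -/
def cpSet (m n r : ℕ) : Set (Tensor m n) :=
  {T | ∃ u : Fin r → Fin m → Fin n → ℂ, ∀ i, T i = ∑ k, ∏ j, u k j (i j)}

/-- Tensors expressible as a sum of `r` symmetric rank-one tensors. -/
def symSet (m n r : ℕ) : Set (Tensor m n) :=
  {T | ∃ v : Fin r → Fin n → ℂ, ∀ i, T i = ∑ k, ∏ j, v k (i j)}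

/-- The Vandermonde vector `v(a,b) ∈ ℂ^n`, `v(a,b)_i = a^(n-1-i) * b^i`. -/
def vand (n : ℕ) (a b : ℂ) : Fin n → ℂ := fun i => a ^ (n - 1 - (i : ℕ)) * b ^ (i : ℕ)

/-- Tensors expressible as a sum of `r` Vandermonde rank-one tensors. -/
def vandSet (m n r : ℕ) : Set (Tensor m n) :=
  {T | ∃ ab : Fin r → ℂ × ℂ, ∀ i, T i = ∑ k, ∏ j, vand n (ab k).1 (ab k).2 (i j)}

/-- The cp rank of a tensor. -/
def cpRank {m n : ℕ} (T : Tensor m n) : ℕ := sInf {r | T ∈ cpSet m n r}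

/-- The symmetric rank of a tensor. -/
def symRank {m n : ℕ} (T : Tensor m n) : ℕ := sInf {r | T ∈ symSet m n r}

/-- The Vandermonde rank of a tensor. -/
def vandRank {m n : ℕ} (T : Tensor m n) : ℕ := sInf {r | T ∈ vandSet m n r}

/-- The border rank of a tensor (closure in the product topology). -/
def brank {m n : ℕ} (T : Tensor m n) : ℕ := sInf {r | T ∈ closure (cpSet m n r)}

/-- The symmetric border rank of a tensor. -/
def bSymRank {m n : ℕ} (T : Tensor m n) : ℕ := sInf {r | T ∈ closure (symSet m n r)}

/-- The border Vandermonde rank of a tensor. -/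
def bVandRank {m n : ℕ} (T : Tensor m n) : ℕ := sInf {r | T ∈ closure (vandSet m n r)}

/-- `T` is the Hankel tensor with parameter vector `h ∈ ℂ^{(n-1)m+1}`. -/
def IsHankel {m n : ℕ} (T : Tensor m n) (h : Fin ((n - 1) * m + 1) → ℂ) : Prop :=
  ∀ i : Fin m → Fin n, T i = h ⟨∑ j, (i j : ℕ), by
    have h1 : ∑ j, (i j : ℕ) ≤ ∑ _j : Fin m, (n - 1) :=
      Finset.sum_le_sum fun j _ => Nat.le_pred_of_lt (i j).isLt
    simp only [Finset.sum_const, Finset.card_univ, Fintype.card_fin, smul_eq_mul] at h1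
    exact Nat.lt_succ_of_le (h1.trans (le_of_eq (Nat.mul_comm m (n - 1))))⟩

/-- The `(d-r+1) × (r+1)` Hankel (catalecticant) matrix `C_{d-r,r}(h)` of `h ∈ ℂ^{d+1}`. -/
def hMat (d r : ℕ) (h : Fin (d + 1) → ℂ) : Matrix (Fin (d - r + 1)) (Fin (r + 1)) ℂ :=
  Matrix.of fun i j => if hij : (i : ℕ) + (j : ℕ) < d + 1 then h ⟨(i : ℕ) + (j : ℕ), hij⟩ else 0

/-- The binary form `f(x,y) = f_0 x^r + f_1 x^(r-1) y + ⋯ + f_r y^r`. -/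
def binForm (r : ℕ) (f : Fin (r + 1) → ℂ) : MvPolynomial (Fin 2) ℂ :=
  ∑ j : Fin (r + 1), C (f j) * X 0 ^ (r - (j : ℕ)) * X 1 ^ (j : ℕ)

/-- The binary form `h(x,y) = ∑_j binom(d,j) h_j x^j y^(d-j)` associated with `h ∈ ℂ^{d+1}`. -/
def assocForm (d : ℕ) (h : Fin (d + 1) → ℂ) : MvPolynomial (Fin 2) ℂ :=
  ∑ j : Fin (d + 1), C ((d.choose (j : ℕ) : ℂ) * h j) * X 0 ^ (j : ℕ) * X 1 ^ (d - (j : ℕ))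

/-- Parameter vectors of binary forms of Waring rank at most `r`. -/
def waringSet (d r : ℕ) : Set (Fin (d + 1) → ℂ) :=
  {h | ∃ ab : Fin r → ℂ × ℂ,
    assocForm d h = ∑ i, (C (ab i).1 * X 0 + C (ab i).2 * X 1) ^ d}

/-- The Waring rank of the binary form associated with `h`. -/
def waringRank (d : ℕ) (h : Fin (d + 1) → ℂ) : ℕ := sInf {r | h ∈ waringSet d r}

/-- The border Waring rank of the binary form associated with `h`. -/
def bWaringRank (d : ℕ) (h : Fin (d + 1) → ℂ) : ℕ := sInf {r | h ∈ closure (waringSet d r)}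

/-- Every `q ≤ N * m` is a sum of `m` naturals bounded by `N`. -/
lemma exists_fin_sum_eq (N : ℕ) : ∀ (m q : ℕ), q ≤ N * m →
    ∃ g : Fin m → Fin (N + 1), ∑ j, (g j : ℕ) = q
  | 0, q, hq => ⟨Fin.elim0, by simp at hq; simp [hq]⟩
  | m + 1, q, hq => by
    obtain ⟨g, hg⟩ := exists_fin_sum_eq N m (q - min q N) (by rw [Nat.mul_succ] at hq; omega)
    refine ⟨Fin.cons ⟨min q N, by omega⟩ g, ?_⟩
    simp only [Fin.sum_univ_succ, Fin.cons_zero, Fin.cons_succ, hg]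
    omega

/-- The entries of a Vandermonde rank-one tensor are monomials of degree `(n - 1) * m`. -/
lemma prod_vand {m n : ℕ} (a b : ℂ) (i : Fin m → Fin n) :
    ∏ j, vand n a b (i j) = a ^ ((n - 1) * m - ∑ j, (i j : ℕ)) * b ^ (∑ j, (i j : ℕ)) := by
  have hsum : ∑ j, (n - 1 - (i j : ℕ)) = (n - 1) * m - ∑ j, (i j : ℕ) := by
    have : ∑ j, (n - 1 - (i j : ℕ)) + ∑ j, (i j : ℕ) = (n - 1) * m := by
      have hj (j : Fin m) : n - 1 - (i j : ℕ) + i j = n - 1 := by omega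
      simp [← Finset.sum_add_distrib, hj, mul_comm]
    omega
  simp only [vand, Finset.prod_mul_distrib, Finset.prod_pow_eq_pow_sum, hsum]

/-- A Vandermonde decomposition of a Hankel tensor gives the parameters as power sums. -/
lemma IsHankel.param_eq {m n r : ℕ} (hn : 2 ≤ n) {H : Tensor m n}
    {h : Fin ((n - 1) * m + 1) → ℂ} (hH : IsHankel H h) {a b : Fin r → ℂ}
    (hab : ∀ i, H i = ∑ k, ∏ j, vand n (a k) (b k) (i j)) (q : Fin ((n - 1) * m + 1)) :
    h q = ∑ k, a k ^ ((n - 1) * m - (q : ℕ)) * b k ^ (q : ℕ) := by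
  obtain ⟨N, rfl⟩ : ∃ N, n = N + 1 := ⟨n - 1, by omega⟩
  obtain ⟨i, hi⟩ := exists_fin_sum_eq N m q (Nat.lt_succ_iff.mp q.isLt)
  have hHi := hH i
  rw [hab i] at hHi
  simp only [prod_vand, hi] at hHi
  exact hHi.symm

/-- Equality of the power sums of degree `d` extends from monomials to products of linear forms. -/
lemma sum_linear_forms_eq {r d : ℕ} {a b c e : Fin r → ℂ}
    (hm : ∀ p q, p + q = d → ∑ k, a k ^ p * b k ^ q = ∑ k, c k ^ p * e k ^ q)
    (L : List (ℂ × ℂ)) : ∀ p q, p + q + L.length = d →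
      ∑ k, a k ^ p * b k ^ q * (L.map fun l => l.1 * a k + l.2 * b k).prod =
        ∑ k, c k ^ p * e k ^ q * (L.map fun l => l.1 * c k + l.2 * e k).prod := by
  induction L with
  | nil => simpa using hm
  | cons l L ih =>
    intro p q hpq
    simp only [List.length_cons] at hpq
    have split (x y : Fin r → ℂ) :
        ∑ k, x k ^ p * y k ^ q * ((l :: L).map fun l => l.1 * x k + l.2 * y k).prod =
          l.1 * ∑ k, x k ^ (p + 1) * y k ^ q * (L.map fun l => l.1 * x k + l.2 * y k).prod +
          l.2 * ∑ k, x k ^ p * y k ^ (q + 1) * (L.map fun l => l.1 * x k + l.2 * y k).prod := by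
      rw [Finset.mul_sum, Finset.mul_sum, ← Finset.sum_add_distrib]
      refine Finset.sum_congr rfl fun k _ => ?_
      simp only [List.map_cons, List.prod_cons]
      ring
    rw [split, split, ih (p + 1) q (by omega), ih p (q + 1) (by omega)]

/-- If the catalecticant matrix of a sum of `r` powers has rank `r`, the columns of its
Vandermonde factor are linearly independent. -/
lemma linearIndependent_of_rank_hMat {d r s : ℕ} (hs : s ≤ d) {h : Fin (d + 1) → ℂ}
    {a b : Fin r → ℂ} (hh : ∀ q : Fin (d + 1), h q = ∑ k, a k ^ (d - (q : ℕ)) * b k ^ (q : ℕ))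
    (hr : r = (hMat d s h).rank) :
    LinearIndependent ℂ
      (fun k (i : Fin (d - s + 1)) => a k ^ (d - s - (i : ℕ)) * b k ^ (i : ℕ)) := by
  set A : Matrix (Fin (d - s + 1)) (Fin r) ℂ :=
    Matrix.of fun i k => a k ^ (d - s - (i : ℕ)) * b k ^ (i : ℕ)
  let B : Matrix (Fin r) (Fin (s + 1)) ℂ :=
    Matrix.of fun k j => a k ^ (s - (j : ℕ)) * b k ^ (j : ℕ)
  have hAB : hMat d s h = A * B := by
    ext i j
    have hij : (i : ℕ) + j < d + 1 := by omega
    simp only [hMat, Matrix.of_apply, dif_pos hij, hh, Matrix.mul_apply, A, B]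
    refine Finset.sum_congr rfl fun k _ => ?_
    rw [show d - ((i : ℕ) + j) = (d - s - i) + (s - j) by omega, pow_add, pow_add]
    ring
  have hA : r ≤ A.rank := by
    conv_lhs => rw [hr, hAB]
    exact Matrix.rank_mul_le_left A B
  have hcols : r ≤ Module.finrank ℂ (Submodule.span ℂ (Set.range A.col)) := by
    rwa [← Matrix.rank_eq_finrank_span_cols]
  exact linearIndependent_iff_card_le_finrank_span.mpr
    ((Fintype.card_fin r).trans_le hcols)

/-- The points of a decomposition with independent Vandermonde vectors are nonzero. -/
lemma ne_zero_of_linearIndependent {N r : ℕ} (hN : 0 < N) {a b : Fin r → ℂ}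
    (hli : LinearIndependent ℂ
      (fun k (i : Fin (N + 1)) => a k ^ (N - (i : ℕ)) * b k ^ (i : ℕ))) (k : Fin r) :
    a k ≠ 0 ∨ b k ≠ 0 := by
  by_contra! hk
  refine hli.ne_zero k (funext fun i => ?_)
  rcases Nat.eq_zero_or_pos (i : ℕ) with hi | hi
  · simp [hk.1, hi, hN.ne']
  · simp [hk.2, hi.ne']

/-- Nonzero vectors of `ℂ²` with vanishing determinant are proportional. -/
lemma exists_scalar_of_det_eq_zero {x y u v : ℂ} (hxy : x ≠ 0 ∨ y ≠ 0) (huv : u ≠ 0 ∨ v ≠ 0)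
    (hdet : v * x + -u * y = 0) : ∃ t : ℂ, t ≠ 0 ∧ x = t * u ∧ y = t * v := by
  rcases huv with hu | hv
  · have hx : x ≠ 0 := by
      rintro rfl
      simp_all
    refine ⟨x / u, div_ne_zero hx hu, by field_simp, ?_⟩
    field_simp
    linear_combination -hdet
  · have hy : y ≠ 0 := by
      rintro rfl
      simp_all
    refine ⟨y / v, div_ne_zero hy hv, ?_, by field_simp⟩
    field_simp
    linear_combination hdet

/-- The points of a decomposition with independent Vandermonde vectors are pairwise
non-proportional. -/
lemma eq_of_linearIndependent_of_smul {N r : ℕ} {a b : Fin r → ℂ}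
    (hli : LinearIndependent ℂ
      (fun k (i : Fin (N + 1)) => a k ^ (N - (i : ℕ)) * b k ^ (i : ℕ))) {k l : Fin r} {t : ℂ}
    (hk : a k = t * a l ∧ b k = t * b l) : k = l := by
  by_contra hkl
  refine one_ne_zero (α := ℂ) (LinearIndepOn.pair_iff _ hkl |>.mp
    (hli.linearIndepOn {k, l}) 1 (-t ^ N) (funext fun i => ?_)).1
  have hN : t ^ N = t ^ (N - (i : ℕ)) * t ^ (i : ℕ) := by
    rw [← pow_add, Nat.sub_add_cancel (Nat.lt_succ_iff.mp i.isLt)]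
  simp only [Pi.add_apply, Pi.smul_apply, Pi.zero_apply, smul_eq_mul, hk.1, hk.2, mul_pow, hN]
  ring

/-- If two families of `r` points have the same power sums of degree `d ≥ 2 * r - 1`, a nonzero
point of the second family that is proportional to no other point of it is proportional to a
point of the first. -/
lemma exists_det_eq_zero {r d : ℕ} (hrd : 2 * r < d + 2) {a b c e : Fin r → ℂ}
    (hm : ∀ p q, p + q = d → ∑ k, a k ^ p * b k ^ q = ∑ k, c k ^ p * e k ^ q) (k : Fin r)
    (hne : c k ≠ 0 ∨ e k ≠ 0) (hpair : ∀ l, e l * c k + -c l * e k = 0 → k = l) :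
    ∃ l, b l * c k + -a l * e k = 0 := by
  by_contra! hnone
  let L : List (ℂ × ℂ) := (Finset.univ.toList.map fun l => (b l, -a l)) ++
    ((Finset.univ.erase k).toList.map fun l => (e l, -c l))
  have hlen : L.length = r + (r - 1) := by simp [L]
  have hr : 0 < r := k.pos
  have hL : (L.map fun l => l.1 * c k + l.2 * e k).prod ≠ 0 := by
    refine List.prod_ne_zero ?_
    simp only [L, List.map_append, List.map_map, List.mem_append, List.mem_map, not_or,
      not_exists, not_and, Function.comp_apply]
    refine ⟨fun l _ => hnone l, fun l hl h0 => ?_⟩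
    simp [hpair l h0] at hl
  have hvanish : ∀ p q, p + q + L.length = d → c k ^ p * e k ^ q = 0 := by
    intro p q hpq
    have hs := sum_linear_forms_eq hm L p q hpq
    rw [Finset.sum_eq_zero, Finset.sum_eq_single k] at hs
    · exact (mul_eq_zero.mp hs.symm).resolve_right hL
    · intro l _ hl
      refine mul_eq_zero_of_right _ (List.prod_eq_zero (List.mem_map.mpr ⟨(e l, -c l), ?_, ?_⟩))
      · exact List.mem_append_right _ (List.mem_map.mpr ⟨l, by simp [hl], rfl⟩)
      · ring
    · simp
    · intro l _
      refine mul_eq_zero_of_right _ (List.prod_eq_zero (List.mem_map.mpr ⟨(b l, -a l), ?_, ?_⟩))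
      · exact List.mem_append_left _ (List.mem_map.mpr ⟨l, by simp, rfl⟩)
      · ring
  rcases hne with hc | he
  · exact pow_ne_zero _ hc (by simpa using hvanish (d - L.length) 0 (by omega))
  · exact pow_ne_zero _ he (by simpa using hvanish 0 (d - L.length) (by omega))

/-- Uniqueness of the Vandermonde rank decomposition when
`r = rank C_{d-s,s}(h) < d/2 + 1` and the kernel form is squarefree. -/
theorem stmt_6 (n m : ℕ) (hn : 2 ≤ n) (hm : 1 ≤ m)
    (H : Tensor m n) (h : Fin ((n - 1) * m + 1) → ℂ) (hH : IsHankel H h)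
    (r : ℕ) (hr : r = (hMat ((n - 1) * m) ((n - 1) * m / 2) h).rank)
    (hrs : 2 * r < (n - 1) * m + 2)
    (f : Fin (r + 1) → ℂ) (hf0 : f ≠ 0)
    (hker : (hMat ((n - 1) * m) r h).mulVec f = 0)
    (hsf : Squarefree (binForm r f))
    (a b c e : Fin r → ℂ)
    (h1 : ∀ i, H i = ∑ k, ∏ j, vand n (a k) (b k) (i j))
    (h2 : ∀ i, H i = ∑ k, ∏ j, vand n (c k) (e k) (i j)) :
    ∃ (σ : Equiv.Perm (Fin r)) (t : Fin r → ℂ),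
      ∀ k, t k ≠ 0 ∧ c k = t k * a (σ k) ∧ e k = t k * b (σ k) := by
  set d := (n - 1) * m with hd
  have hd0 : 0 < d := Nat.mul_pos (by omega) hm
  have hN : 0 < d - d / 2 := by omega
  have pa := hH.param_eq hn h1
  have pc := hH.param_eq hn h2
  have la := linearIndependent_of_rank_hMat (Nat.div_le_self d 2) pa hr
  have lc := linearIndependent_of_rank_hMat (Nat.div_le_self d 2) pc hr
  have na := ne_zero_of_linearIndependent hN la
  have nc := ne_zero_of_linearIndependent hN lc
  have hmom : ∀ p q, p + q = d → ∑ k, a k ^ p * b k ^ q = ∑ k, c k ^ p * e k ^ q := by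
    intro p q hpq
    have heq := (pa ⟨q, by omega⟩).symm.trans (pc ⟨q, by omega⟩)
    simpa only [← hd, show d - q = p by omega] using heq
  have hex : ∀ k, ∃ l, ∃ t : ℂ, t ≠ 0 ∧ c k = t * a l ∧ e k = t * b l := by
    intro k
    obtain ⟨l, hl⟩ := exists_det_eq_zero hrs hmom k (nc k) fun l hl =>
      let ⟨_, _, ht⟩ := exists_scalar_of_det_eq_zero (nc k) (nc l) hl
      eq_of_linearIndependent_of_smul lc ht
    exact ⟨l, exists_scalar_of_det_eq_zero (nc k) (na l) hl⟩
  choose σ t ht hc he using hex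
  have hσ : Function.Injective σ := by
    intro k l hkl
    refine eq_of_linearIndependent_of_smul lc (t := t k / t l) ⟨?_, ?_⟩
    · rw [hc k, hc l, hkl, ← mul_assoc, div_mul_cancel₀ _ (ht l)]
    · rw [he k, he l, hkl, ← mul_assoc, div_mul_cancel₀ _ (ht l)]
  exact ⟨Equiv.ofBijective σ (Finite.injective_iff_bijective.mp hσ), t,
    fun k => ⟨ht k, hc k, he k⟩⟩
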